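/- Let K > 0, T > 0, and let f : (0, T) → ℝ be continuously differentiable with f'(ρ) ≤ −4·f(ρ)^2 − K/4 for all ρ ∈ (0, T), and suppose limsup_{ρ→0⁺} ( f(ρ) − 1/(4ρ) ) ≤ 0. Then f(ρ) ≤ (√K/4)·cot(√K·ρ) for all ρ ∈ (0, min(T, π/√K)). -/

import Mathlib

/-- Riccati comparison with the cotangent model: if `f' ≤ -4 f² - K/4` on `(0, T)` and
`limsup_{ρ→0⁺} (f ρ - 1/(4ρ)) ≤ 0`, then `f ρ ≤ (√K/4)·cot(√K·ρ)` on
`(0, min T (π/√K))`. -/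
theorem riccati_comparison_cot (K T : ℝ) (hK : 0 < K) (hT : 0 < T)
    (f f' : ℝ → ℝ)
    (hf : ∀ ρ ∈ Set.Ioo 0 T, HasDerivAt f (f' ρ) ρ)
    (hf' : ContinuousOn f' (Set.Ioo 0 T))
    (hineq : ∀ ρ ∈ Set.Ioo 0 T, f' ρ ≤ -4 * (f ρ) ^ 2 - K / 4)
    (hlim : Filter.limsup (fun ρ => f ρ - 1 / (4 * ρ)) (nhdsWithin 0 (Set.Ioi 0)) ≤ 0) :
    ∀ ρ ∈ Set.Ioo 0 (min T (Real.pi / Real.sqrt K)),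
      f ρ ≤ Real.sqrt K / 4 *
        (Real.cos (Real.sqrt K * ρ) / Real.sin (Real.sqrt K * ρ)) := by
  intro ρ hρ
  obtain ⟨h0, h1⟩ := hρ
  have hρT : ρ < T := lt_of_lt_of_le h1 (min_le_left _ _)
  have hρpi : ρ < Real.pi / Real.sqrt K := lt_of_lt_of_le h1 (min_le_right _ _)
  obtain ⟨w, hw⟩ : ∃ w, w = Real.sqrt K := ⟨_, rfl⟩
  have hwpos : 0 < w := hw ▸ Real.sqrt_pos.2 hK
  have hwK : K = w ^ 2 := by rw [hw, Real.sq_sqrt hK.le]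
  rw [← hw] at hρpi ⊢
  have hwρ : w * ρ < Real.pi := by
    rw [lt_div_iff₀ hwpos] at hρpi
    linarith
  have hwρ0 : 0 < w * ρ := mul_pos hwpos h0
  have hd : ∀ x ∈ Set.Ioo 0 T, HasDerivAt (fun y => Real.arctan (4 * f y / w) + w * y)
      (1 / (1 + (4 * f x / w) ^ 2) * (4 * f' x / w) + w * 1) x := by
    intro x hx
    exact ((((hf x hx).const_mul 4).div_const w).arctan).add ((hasDerivAt_id x).const_mul w)
  have hanti : AntitoneOn (fun y => Real.arctan (4 * f y / w) + w * y) (Set.Ioo 0 T) := by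
    apply antitoneOn_of_deriv_nonpos (convex_Ioo 0 T)
    · exact fun x hx => (hd x hx).continuousAt.continuousWithinAt
    · rw [interior_Ioo]
      exact fun x hx => (hd x hx).differentiableAt.differentiableWithinAt
    · rw [interior_Ioo]
      intro x hx
      rw [(hd x hx).deriv]
      have h := hineq x hx
      have e : 1 / (1 + (4 * f x / w) ^ 2) * (4 * f' x / w) + w * 1
          = w * (4 * f' x + 16 * f x ^ 2 + w ^ 2) / (w ^ 2 + 16 * f x ^ 2) := by
        have : w ^ 2 + 16 * f x ^ 2 ≠ 0 := by positivity
        have h3 : 1 + (4 * f x / w) ^ 2 = (w ^ 2 + 16 * f x ^ 2) / w ^ 2 := by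
          field_simp
          ring
        rw [h3]
        field_simp
        ring
      rw [e]
      apply div_nonpos_of_nonpos_of_nonneg _ (by positivity)
      apply mul_nonpos_of_nonneg_of_nonpos hwpos.le
      rw [hwK] at h
      linarith
  have key : Real.arctan (4 * f ρ / w) ≤ Real.pi / 2 - w * ρ := by
    by_contra! hc
    obtain ⟨δ, hδ⟩ : ∃ δ, δ = Real.arctan (4 * f ρ / w) - (Real.pi / 2 - w * ρ) := ⟨_, rfl⟩
    have hδ0 : 0 < δ := by linarith
    have hs0 : 0 < min (δ / w) (ρ / 2) := lt_min (by positivity) (by positivity)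
    have hs1 : min (δ / w) (ρ / 2) ≤ ρ := (min_le_right _ _).trans (by linarith)
    have hs2 : w * min (δ / w) (ρ / 2) ≤ δ := by
      have := (le_div_iff₀ hwpos).1 (min_le_left (δ / w) (ρ / 2))
      linarith
    have h5 := hanti ⟨hs0, lt_of_le_of_lt hs1 hρT⟩ ⟨h0, hρT⟩ hs1
    have h6 := Real.arctan_lt_pi_div_two (4 * f (min (δ / w) (ρ / 2)) / w)
    simp only at h5
    linarith
  have h7 : 4 * f ρ / w ≤ Real.tan (Real.pi / 2 - w * ρ) := by
    rw [← Real.tan_arctan (4 * f ρ / w)]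
    exact Real.strictMonoOn_tan.monotoneOn
      ⟨Real.neg_pi_div_two_lt_arctan _, Real.arctan_lt_pi_div_two _⟩
      ⟨by linarith, by linarith⟩ key
  rw [Real.tan_eq_sin_div_cos, Real.sin_pi_div_two_sub, Real.cos_pi_div_two_sub,
    div_le_iff₀ hwpos] at h7
  linarith
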